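/- The conditional expectation of the split composite likelihood ratio statistic at the true parameter given the second half of the sample is almost surely at most one: E_{θ*}[U_{α,β,n}^0(θ*) | σ(X_n^1)] ≤ 1 almost surely, for every n ∈ ℕ. -/

import Mathlib

open MeasureTheory ENNReal
open scoped BigOperators Classical

noncomputable section

/-- Division in `ℝ≥0∞` with the convention that the ratio is `0` when the
denominator is `0`. -/
def safeDiv (a b : ℝ≥0∞) : ℝ≥0∞ := if b = 0 then 0 else a / b

variable {d : ℕ} {π : Fin d → Type*} [∀ i, MeasurableSpace (π i)]

/-- The marginal density on the coordinates in `S`, obtained by integrating a density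
out over the coordinates in `[d] \ S` (as a function of the full vector, depending only
on the coordinates in `S`). -/
def marginal (μ : ∀ i, Measure (π i)) (S : Finset (Fin d))
    (f : (∀ i, π i) → ℝ≥0∞) : (∀ i, π i) → ℝ≥0∞ :=
  MeasureTheory.lmarginal μ Sᶜ f

/-- The conditional density of the coordinates in `T1` given the coordinates in `T2`,
with the convention that the ratio is `0` when the denominator is `0`. -/
def condDens (μ : ∀ i, Measure (π i)) (T1 T2 : Finset (Fin d))
    (f : (∀ i, π i) → ℝ≥0∞) (x : ∀ i, π i) : ℝ≥0∞ :=
  safeDiv (marginal μ (T1 ∪ T2) f x) (marginal μ T2 f x)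

/-- `𝕊_d`: the nonempty subsets of `[d]`. -/
abbrev Sd (d : ℕ) := {S : Finset (Fin d) // S.Nonempty}

/-- `𝕋_d`: ordered pairs of disjoint nonempty subsets of `[d]`. -/
abbrev Td (d : ℕ) := {T : Finset (Fin d) × Finset (Fin d) //
  T.1.Nonempty ∧ T.2.Nonempty ∧ Disjoint T.1 T.2}

/-- The individual composite likelihood
`p_{α,β}(x;θ) = ∏_S p_S(x_S;θ)^(α_S/γ) ∏_T p(x_{T←}|x_{T→};θ)^(β_T/γ)`,
where `f = p(·;θ)` is the joint density. -/
def compLik (μ : ∀ i, Measure (π i)) (α : Sd d → ℝ) (β : Td d → ℝ) (γ : ℝ)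
    (f : (∀ i, π i) → ℝ≥0∞) (x : ∀ i, π i) : ℝ≥0∞ :=
  (∏ S : Sd d, marginal μ S.1 f x ^ (α S / γ)) *
  (∏ T : Td d, condDens μ T.1.1 T.1.2 f x ^ (β T / γ))


lemma safeDiv_eq (a b : ℝ≥0∞) : safeDiv a b = a * (if b = 0 then 0 else b⁻¹) := by
  unfold safeDiv; split_ifs <;> simp [div_eq_mul_inv]

lemma safeDiv_mul_le (a b : ℝ≥0∞) : safeDiv a b * b ≤ a := by
  unfold safeDiv; split_ifs with h
  · simp
  · rw [div_eq_mul_inv, mul_assoc]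
    exact (mul_le_mul_right (ENNReal.inv_mul_le_one b) a).trans (mul_one a).le

lemma invk_mul_le (b : ℝ≥0∞) : (if b = 0 then 0 else b⁻¹) * b ≤ 1 := by
  split_ifs with h
  · simp
  · exact ENNReal.inv_mul_le_one b

lemma safeDiv_safeDiv (a b c : ℝ≥0∞) : safeDiv a (safeDiv b c) * b ≤ a * c := by
  by_cases hc : c = 0
  · simp [safeDiv, hc]
  by_cases hb : b = 0
  · simp [hb]
  by_cases hbt : b = ⊤
  · by_cases hct : c = ⊤
    · simp [safeDiv, hbt, hct]
    · simp [safeDiv, hc, hbt, ENNReal.top_div, hct]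
  by_cases hct : c = ⊤
  · simp [safeDiv, hct]
  have h : b / c ≠ 0 := by simp [hb, hct]
  simp only [safeDiv, hc, if_false, h]
  rw [div_eq_mul_inv, ENNReal.inv_div (Or.inl hct) (Or.inl hc), mul_assoc,
    ENNReal.div_mul_cancel hb hbt]

lemma safeDiv_mul_mul (a b a' b' : ℝ≥0∞) :
    safeDiv (a * a') (b * b') ≤ safeDiv a b * safeDiv a' b' := by
  by_cases hb : b = 0
  · simp [safeDiv, hb]
  by_cases hb' : b' = 0
  · simp [safeDiv, hb']
  simp only [safeDiv, hb, hb', mul_eq_zero, or_self, if_false, div_eq_mul_inv]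
  rw [ENNReal.mul_inv (Or.inl hb) (Or.inr hb')]
  exact le_of_eq (by ring)

lemma safeDiv_prod {ι : Type*} (s : Finset ι) (a b : ι → ℝ≥0∞) :
    safeDiv (∏ i ∈ s, a i) (∏ i ∈ s, b i) ≤ ∏ i ∈ s, safeDiv (a i) (b i) := by
  induction s using Finset.cons_induction with
  | empty => simp [safeDiv]
  | cons i s hi ih =>
    simp only [Finset.prod_cons]
    exact (safeDiv_mul_mul _ _ _ _).trans (mul_le_mul_right ih _)

lemma safeDiv_rpow (a b : ℝ≥0∞) {w : ℝ} (hw : 0 ≤ w) :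
    safeDiv (a ^ w) (b ^ w) ≤ safeDiv a b ^ w := by
  rcases hw.eq_or_lt with rfl | hw'
  · simp [safeDiv]
  by_cases hb : b = 0
  · simp [safeDiv, hb, hw']
  · have : b ^ w ≠ 0 := by simp [ENNReal.rpow_eq_zero_iff, hb, hw'.le]
    simp only [safeDiv, hb, this, if_false]
    rw [ENNReal.div_rpow_of_nonneg _ _ hw]

lemma safeDiv_measurable {A : Type*} [MeasurableSpace A] {f g : A → ℝ≥0∞}
    (hf : Measurable f) (hg : Measurable g) : Measurable fun x => safeDiv (f x) (g x) := by
  unfold safeDiv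
  exact Measurable.ite (hg (measurableSet_singleton 0)) measurable_const (hf.div hg)

section
variable {d : ℕ} {π : Fin d → Type*} [∀ i, MeasurableSpace (π i)]
  (μ : ∀ i, Measure (π i))

lemma lmarginal_pull (s : Finset (Fin d)) (h f : (∀ i, π i) → ℝ≥0∞) (hf : Measurable f)
    (hh : ∀ x y : ∀ i, π i, (∀ i ∉ s, x i = y i) → h x = h y) (x : ∀ i, π i) :
    lmarginal μ s (fun x => h x * f x) x = h x * lmarginal μ s f x := by
  unfold lmarginal
  have : ∀ y : ∀ i : s, π i, h (Function.updateFinset x s y) = h x := fun y =>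
    hh _ _ fun i hi => by simp [Function.updateFinset, hi]
  simp only [this]
  exact lintegral_const_mul _ (hf.comp measurable_updateFinset)

lemma marginal_congr' (S U : Finset (Fin d)) (hSU : S ⊆ U) (f : (∀ i, π i) → ℝ≥0∞)
    (x y : ∀ i, π i) (h : ∀ i ∉ Uᶜ, x i = y i) : marginal μ S f x = marginal μ S f y := by
  refine lmarginal_congr μ f fun i hi => h i ?_
  simp only [Finset.mem_compl, not_not] at hi ⊢
  exact hSU hi

variable [∀ i, SigmaFinite (μ i)]

lemma marginal_measurable (S : Finset (Fin d)) {f : (∀ i, π i) → ℝ≥0∞} (hf : Measurable f) :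
    Measurable (marginal μ S f) := hf.lmarginal μ

lemma int_S (S : Finset (Fin d)) {f g : (∀ i, π i) → ℝ≥0∞} (hf : Measurable f)
    (hg : Measurable g) :
    ∫⁻ x, safeDiv (marginal μ S g x) (marginal μ S f x) * f x ∂(Measure.pi μ)
      ≤ ∫⁻ x, g x ∂(Measure.pi μ) := by
  refine lintegral_le_of_lmarginal_le Sᶜ
    ((safeDiv_measurable (marginal_measurable μ S hg) (marginal_measurable μ S hf)).mul hf) hg ?_
  intro x
  rw [lmarginal_pull μ Sᶜ _ f hf]
  · exact safeDiv_mul_le _ _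
  · intro x y h
    rw [marginal_congr' μ S S subset_rfl f x y h, marginal_congr' μ S S subset_rfl g x y h]

lemma int_T (T1 T2 : Finset (Fin d)) {f g : (∀ i, π i) → ℝ≥0∞} (hf : Measurable f)
    (hg : Measurable g) :
    ∫⁻ x, safeDiv (condDens μ T1 T2 g x) (condDens μ T1 T2 f x) * f x ∂(Measure.pi μ)
      ≤ ∫⁻ x, f x ∂(Measure.pi μ) := by
  have m2f := marginal_measurable μ T2 hf
  have m2g := marginal_measurable μ T2 hg
  have mUf := marginal_measurable μ (T1 ∪ T2) hf
  have mUg := marginal_measurable μ (T1 ∪ T2) hg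
  set k : (∀ i, π i) → ℝ≥0∞ :=
    fun x => if marginal μ T2 g x = 0 then 0 else (marginal μ T2 g x)⁻¹ with hk
  have mk : Measurable k :=
    Measurable.ite (m2g (measurableSet_singleton 0)) measurable_const m2g.inv
  have mB : Measurable fun x => (k x * marginal μ T2 f x) * g x := (mk.mul m2f).mul hg
  refine (lintegral_le_of_lmarginal_le (T1 ∪ T2)ᶜ
    ((safeDiv_measurable (safeDiv_measurable mUg m2g)
      (safeDiv_measurable mUf m2f)).mul hf) mB ?_).trans
    (lintegral_le_of_lmarginal_le T2ᶜ mB hf ?_)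
  · intro x
    change lmarginal μ (T1 ∪ T2)ᶜ (fun x =>
      safeDiv (safeDiv (marginal μ (T1 ∪ T2) g x) (marginal μ T2 g x))
        (safeDiv (marginal μ (T1 ∪ T2) f x) (marginal μ T2 f x)) * f x) x ≤ _
    rw [lmarginal_pull μ _ _ f hf, lmarginal_pull μ _ _ g hg]
    · refine (safeDiv_safeDiv _ (marginal μ (T1 ∪ T2) f x) _).trans (le_of_eq ?_)
      rw [safeDiv_eq]
      simp only [hk, marginal]
      ring
    · intro x y h
      simp only [hk]
      rw [marginal_congr' μ T2 _ Finset.subset_union_right f x y h,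
        marginal_congr' μ T2 _ Finset.subset_union_right g x y h]
    · intro x y h
      rw [marginal_congr' μ T2 _ Finset.subset_union_right f x y h,
        marginal_congr' μ T2 _ Finset.subset_union_right g x y h,
        marginal_congr' μ _ _ subset_rfl f x y h,
        marginal_congr' μ _ _ subset_rfl g x y h]
  · intro x
    rw [lmarginal_pull μ _ _ g hg]
    · have h1 : k x * marginal μ T2 g x ≤ 1 := invk_mul_le _
      calc k x * marginal μ T2 f x * marginal μ T2 g x
          = (k x * marginal μ T2 g x) * marginal μ T2 f x := by ring
        _ ≤ 1 * marginal μ T2 f x := by gcongr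
        _ = _ := by rw [one_mul]; rfl
    · intro x y h
      simp only [hk]
      rw [marginal_congr' μ T2 _ subset_rfl f x y h, marginal_congr' μ T2 _ subset_rfl g x y h]

lemma int_comp (α : Sd d → ℝ) (β : Td d → ℝ)
    (hα : ∀ S, 0 ≤ α S) (hβ : ∀ T, 0 ≤ β T)
    (γ : ℝ) (hγ : γ = ∑ S, α S + ∑ T, β T) (hγpos : 0 < γ)
    {f g : (∀ i, π i) → ℝ≥0∞} (hf : Measurable f) (hg : Measurable g)
    (hf1 : ∫⁻ x, f x ∂(Measure.pi μ) = 1) (hg1 : ∫⁻ x, g x ∂(Measure.pi μ) = 1) :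
    ∫⁻ x, safeDiv (compLik μ α β γ g x) (compLik μ α β γ f x)
      ∂((Measure.pi μ).withDensity f) ≤ 1 := by
  let F : Sd d ⊕ Td d → (∀ i, π i) → ℝ≥0∞ := Sum.elim
    (fun S x => safeDiv (marginal μ S.1 g x) (marginal μ S.1 f x))
    (fun T x => safeDiv (condDens μ T.1.1 T.1.2 g x) (condDens μ T.1.1 T.1.2 f x))
  let w : Sd d ⊕ Td d → ℝ := Sum.elim (fun S => α S / γ) (fun T => β T / γ)
  have hF : ∀ i, Measurable (F i) := by
    rintro (S | T)
    · exact safeDiv_measurable (marginal_measurable μ _ hg) (marginal_measurable μ _ hf)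
    · exact safeDiv_measurable
        (safeDiv_measurable (marginal_measurable μ _ hg) (marginal_measurable μ _ hg))
        (safeDiv_measurable (marginal_measurable μ _ hf) (marginal_measurable μ _ hf))
  have hw : ∀ i, 0 ≤ w i := by
    rintro (S | T)
    · exact div_nonneg (hα S) hγpos.le
    · exact div_nonneg (hβ T) hγpos.le
  have hw1 : ∑ i, w i = 1 := by
    rw [Fintype.sum_sum_type]
    simp only [w, Sum.elim_inl, Sum.elim_inr]
    rw [← Finset.sum_div, ← Finset.sum_div, ← add_div, ← hγ, div_self hγpos.ne']
  have hle : ∀ x, safeDiv (compLik μ α β γ g x) (compLik μ α β γ f x) ≤ ∏ i, F i x ^ w i := by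
    intro x
    rw [Fintype.prod_sum_type]
    unfold compLik
    refine (safeDiv_mul_mul _ _ _ _).trans (mul_le_mul' ?_ ?_)
    · refine (safeDiv_prod _ _ _).trans (Finset.prod_le_prod' fun S _ => ?_)
      exact safeDiv_rpow _ _ (hw (Sum.inl S))
    · refine (safeDiv_prod _ _ _).trans (Finset.prod_le_prod' fun T _ => ?_)
      exact safeDiv_rpow _ _ (hw (Sum.inr T))
  refine (lintegral_mono hle).trans ?_
  refine (ENNReal.lintegral_prod_norm_pow_le Finset.univ
    (fun i _ => (hF i).aemeasurable) hw1 (fun i _ => hw i)).trans ?_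
  refine Finset.prod_le_one' fun i _ => ENNReal.rpow_le_one ?_ (hw i)
  rw [lintegral_withDensity_eq_lintegral_mul _ hf (hF i)]
  simp only [Pi.mul_apply, mul_comm (f _)]
  rcases i with S | T
  · exact (int_S μ S.1 hf hg).trans hg1.le
  · exact (int_T μ T.1.1 T.1.2 hf hg).trans hf1.le

lemma marginal_jm {Θ : Type*} [MeasurableSpace Θ] (p : Θ → (∀ i, π i) → ℝ≥0∞)
    (hp : Measurable (Function.uncurry p)) (S : Finset (Fin d)) :
    Measurable fun z : Θ × (∀ i, π i) => marginal μ S (p z.1) z.2 := by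
  unfold marginal lmarginal
  refine Measurable.lintegral_prod_right'
    (f := fun q : (Θ × (∀ i, π i)) × (∀ i : (Sᶜ : Finset (Fin d)), π i) =>
      p q.1.1 (Function.updateFinset q.1.2 Sᶜ q.2)) ?_
  have h2 : Measurable fun q : (Θ × (∀ i, π i)) × (∀ i : (Sᶜ : Finset (Fin d)), π i) =>
      Function.updateFinset q.1.2 Sᶜ q.2 :=
    measurable_updateFinset'.comp
      ((measurable_snd.comp measurable_fst).prodMk measurable_snd)
  exact hp.comp ((measurable_fst.comp measurable_fst).prodMk h2)

lemma compLik_jm {Θ : Type*} [MeasurableSpace Θ] (p : Θ → (∀ i, π i) → ℝ≥0∞)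
    (hp : Measurable (Function.uncurry p)) (α : Sd d → ℝ) (β : Td d → ℝ) (γ : ℝ) :
    Measurable fun z : Θ × (∀ i, π i) => compLik μ α β γ (p z.1) z.2 := by
  unfold compLik
  refine Measurable.mul ?_ ?_
  · exact Finset.measurable_fun_prod _ fun S _ => (marginal_jm μ p hp _).pow_const _
  · exact Finset.measurable_fun_prod _ fun S _ =>
      (safeDiv_measurable (marginal_jm μ p hp _) (marginal_jm μ p hp _)).pow_const _

end

/-- Abstract conditional expectation bound. -/
lemma condexp_le_one_aux {Ω A B : Type*} [MeasurableSpace Ω] [MeasurableSpace A]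
    [mB : MeasurableSpace B] (Pr : Measure Ω) [IsProbabilityMeasure Pr]
    (Y : Ω → A) (Z : Ω → B) (hY : Measurable Y) (hZ : Measurable Z)
    (P : Measure A) (Q : Measure B) [IsProbabilityMeasure P] [IsProbabilityMeasure Q]
    (hlaw : Measure.map (fun ω => (Y ω, Z ω)) Pr = P.prod Q)
    (h : A × B → ℝ≥0∞) (hh : Measurable h) (h1 : ∀ b, ∫⁻ a, h (a, b) ∂P ≤ 1) :
    ∀ᵐ ω ∂Pr, (Pr[(fun ω' => (h (Y ω', Z ω')).toReal) | MeasurableSpace.comap Z mB]) ω ≤ 1 := by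
  have hm : MeasurableSpace.comap Z mB ≤ ‹MeasurableSpace Ω› := hZ.comap_le
  by_cases hint : Integrable (fun ω' => (h (Y ω', Z ω')).toReal) Pr
  swap
  · rw [condExp_of_not_integrable hint]; simp
  have hYZ : Measurable fun ω => (Y ω, Z ω) := hY.prodMk hZ
  suffices H : Pr[(fun ω' => (h (Y ω', Z ω')).toReal) | MeasurableSpace.comap Z mB]
      ≤ᵐ[Pr.trim hm] fun _ => (1 : ℝ) from ae_le_of_ae_le_trim H
  refine ae_le_of_forall_setIntegral_le
    (integrable_condExp.trim hm stronglyMeasurable_condExp) (integrable_const _) ?_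
  intro s hs _
  rw [← setIntegral_trim hm stronglyMeasurable_condExp hs,
    ← setIntegral_trim hm stronglyMeasurable_const hs, setIntegral_condExp hm hint hs]
  obtain ⟨t, ht, rfl⟩ := hs
  have key : ∫⁻ ω in Z ⁻¹' t, h (Y ω, Z ω) ∂Pr ≤ Pr (Z ⁻¹' t) := by
    have e : ∀ u : A × B → ℝ≥0∞, Measurable u → ∫⁻ ω in Z ⁻¹' t, u (Y ω, Z ω) ∂Pr
        = ∫⁻ b in t, ∫⁻ a, u (a, b) ∂P ∂Q := by
      intro u hu
      have hS : MeasurableSet (Prod.snd ⁻¹' t : Set (A × B)) := measurable_snd ht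
      rw [← lintegral_indicator (hZ ht), ← lintegral_indicator ht]
      have hi := hu.indicator hS
      have := lintegral_map (μ := Pr) hi hYZ
      rw [hlaw, lintegral_prod_symm _ hi.aemeasurable] at this
      refine Eq.trans ?_ (this.symm.trans ?_)
      · rfl
      · congr 1; ext b
        by_cases hb : b ∈ t <;> simp [Set.indicator, hb]
    have e1 := e (fun _ => 1) measurable_const
    rw [e h hh]
    calc ∫⁻ b in t, ∫⁻ a, h (a, b) ∂P ∂Q ≤ ∫⁻ b in t, 1 ∂Q := lintegral_mono fun b => h1 b
      _ = Pr (Z ⁻¹' t) := by simpa using e1.symm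
  rw [integral_eq_lintegral_of_nonneg_ae (Filter.Eventually.of_forall fun _ => toReal_nonneg)
    hint.aestronglyMeasurable.restrict]
  have : ∫ x in Z ⁻¹' t, (1 : ℝ) ∂Pr = (Pr (Z ⁻¹' t)).toReal := by
    simp [Measure.real]
  rw [this]
  refine ENNReal.toReal_mono (measure_ne_top _ _) ?_
  exact (lintegral_mono fun ω => ENNReal.ofReal_toReal_le).trans key

set_option maxHeartbeats 2000000 in
/-- The conditional expectation of the split composite likelihood
ratio statistic at the true parameter, given `σ(X_n^1)`, is almost surely at most
one: `E_{θ*}[U_{α,β,n}^0(θ*) | σ(X_n^1)] ≤ 1` a.s., for every `n ∈ ℕ`. -/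
theorem split_CLRS_condexp_le_one
    {d : ℕ} (hd : 1 ≤ d)
    {π : Fin d → Type*} [∀ i, MeasurableSpace (π i)]
    (μ : ∀ i, Measure (π i)) [∀ i, SigmaFinite (μ i)]
    {Θ : Type*} [MeasurableSpace Θ]
    (p : Θ → (∀ i, π i) → ℝ≥0∞)
    (hp_meas : Measurable (Function.uncurry p))
    (hp_prob : ∀ θ : Θ, ∫⁻ x, p θ x ∂(Measure.pi μ) = 1)
    (α : Sd d → ℝ) (β : Td d → ℝ)
    (hα : ∀ S, 0 ≤ α S) (hβ : ∀ T, 0 ≤ β T)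
    (γ : ℝ) (hγ : γ = ∑ S, α S + ∑ T, β T) (hγpos : 0 < γ)
    {Ω : Type*} [MeasurableSpace Ω]
    (Pr : Measure Ω) [IsProbabilityMeasure Pr]
    (θstar : Θ) (n : ℕ)
    -- the two halves `X_n^0` and `X_n^1` of the i.i.d. sample of size `2n`
    (X0 X1 : Fin n → Ω → (∀ i, π i))
    (hX0 : ∀ j, Measurable (X0 j)) (hX1 : ∀ j, Measurable (X1 j))
    -- the `2n` observations are i.i.d. with density `p(·;θ*)` w.r.t. `μ`
    (hlaw : Measure.map (fun ω => (fun j => X0 j ω, fun j => X1 j ω)) Pr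
      = (Measure.pi fun _ : Fin n => (Measure.pi μ).withDensity (p θstar)).prod
          (Measure.pi fun _ : Fin n => (Measure.pi μ).withDensity (p θstar)))
    -- the estimators `θ̃_n^0`, `θ̃_n^1` are measurable functions of `X_n^0`, `X_n^1` alone
    (t0 t1 : (Fin n → ∀ i, π i) → Θ)
    (ht0 : Measurable t0) (ht1 : Measurable t1) :
    ∀ᵐ ω ∂Pr,
      (Pr[(fun ω' => (safeDiv
            (∏ j : Fin n, compLik μ α β γ (p (t1 fun j' => X1 j' ω')) (X0 j ω'))
            (∏ j : Fin n, compLik μ α β γ (p θstar) (X0 j ω'))).toReal) |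
          MeasurableSpace.comap (fun ω' => fun j => X1 j ω')
            (inferInstance : MeasurableSpace (Fin n → ∀ i, π i))]) ω ≤ 1 := by
  have hpθ : ∀ θ, Measurable (p θ) := fun θ => hp_meas.comp (measurable_const.prodMk measurable_id)
  have hν : IsProbabilityMeasure ((Measure.pi μ).withDensity (p θstar)) :=
    ⟨by rw [withDensity_apply _ MeasurableSet.univ, Measure.restrict_univ]; exact hp_prob θstar⟩
  have hc := compLik_jm μ p hp_meas α β γ
  have hcθ : ∀ θ : Θ, Measurable fun x => compLik μ α β γ (p θ) x := fun θ =>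
    hc.comp (measurable_prodMk_left (x := θ))
  refine condexp_le_one_aux Pr (fun ω j => X0 j ω) (fun ω j => X1 j ω)
    (measurable_pi_lambda _ hX0) (measurable_pi_lambda _ hX1) _ _ hlaw
    (fun z => safeDiv (∏ j : Fin n, compLik μ α β γ (p (t1 z.2)) (z.1 j))
      (∏ j : Fin n, compLik μ α β γ (p θstar) (z.1 j))) ?_ ?_
  · have h1 : Measurable fun z : (Fin n → ∀ i, π i) × (Fin n → ∀ i, π i) => t1 z.2 :=
      ht1.comp measurable_snd
    have h2 : ∀ j : Fin n, Measurable
        fun z : (Fin n → ∀ i, π i) × (Fin n → ∀ i, π i) => z.1 j :=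
      fun j => (measurable_pi_apply j).comp measurable_fst
    refine safeDiv_measurable ?_ ?_
    · refine Finset.measurable_fun_prod _ fun j _ => ?_
      exact hc.comp (h1.prodMk (h2 j))
    · refine Finset.measurable_fun_prod _ fun j _ => ?_
      exact hc.comp (measurable_const.prodMk (h2 j))
  · intro b
    set R : (∀ i, π i) → ℝ≥0∞ := fun x =>
      safeDiv (compLik μ α β γ (p (t1 b)) x) (compLik μ α β γ (p θstar) x) with hR
    have hRm : Measurable R := safeDiv_measurable (hcθ _) (hcθ _)
    refine (lintegral_mono fun a => safeDiv_prod _ _ _).trans ?_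
    have hind := ProbabilityTheory.iIndepFun_pi (ι := Fin n)
      (μ := fun _ => (Measure.pi μ).withDensity (p θstar)) (X := fun _ => R)
      (fun _ => hRm.aemeasurable)
    refine (ProbabilityTheory.lintegral_prod_eq_prod_lintegral_of_indepFun Finset.univ _ hind
      (fun j => hRm.comp (measurable_pi_apply j))).le.trans ?_
    refine Finset.prod_le_one' fun j _ => ?_
    have := (measurePreserving_eval (fun _ : Fin n => (Measure.pi μ).withDensity (p θstar))
      j).lintegral_comp hRm
    refine (le_of_eq this).trans ?_
    exact int_comp μ α β hα hβ γ hγ hγpos (hpθ _) (hpθ _) (hp_prob _) (hp_prob _)
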